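/- Let θ ∈ (0, π) with cos θ ∈ ℚ, and write cos θ = s/r with r, s coprime integers and r > 0. Let k be a positive squarefree integer. Then there exist infinitely many pairs (M, N) of θ-congruent numbers such that N = k·M; that is, the set of pairs (M, N) of positive squarefree integers such that M and N are both θ-congruent and N = k·M is infinite. -/

import Mathlib

/-- A positive squarefree integer `n` is `θ`-congruent (where `cos θ = s / r` with
`r > 0` and `gcd(s, r) = 1`) if `n * r * sin θ` is the area of a triangle with rational
sides and an angle `θ`; equivalently, there are positive rationals `a, b, c` with
`a * b = 2 * n * r` and `c ^ 2 = a ^ 2 + b ^ 2 - 2 * a * b * (s / r)`. -/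
def IsThetaCongruent (r s : ℤ) (n : ℕ) : Prop :=
  ∃ a b c : ℚ, 0 < a ∧ 0 < b ∧ 0 < c ∧
    a * b = 2 * (n : ℚ) * (r : ℚ) ∧
    c ^ 2 = a ^ 2 + b ^ 2 - 2 * a * b * ((s : ℚ) / (r : ℚ))

/-!
Put `α = r - s`, `β = 2 r` and `f(x) = x (x + α) (x + β)`. A rational point with `x > 0` on the
quadratic twist `n y² = f(x)` yields a triangle showing that `n` is `θ`-congruent, so it suffices
to find `x, q > 0` with `f(x) ∈ n ℚ²` and `f(q x) ∈ k n ℚ²`. For each `q` there is an explicit `x`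
such that `f(x) f(q x)` is `q` times a square, and any `q ∈ k ℚ²` then serves; `n` is the squarefree
part of `f(x)`.

It remains to make `n` large and prime to `k`. If `q` is `p`-adically close to `0` or to `∞`, the
factors of `f(x)` are known up to `p`-adic squares, and for `p ∣ k` the right choice between `0` and
`∞`, dictated by the parity of the valuation of `2 (α + β)`, makes the valuation of `f(x)` even.
On the other hand, writing `q = P / Q`, a large prime dividing `P + Q` exactly once divides the
denominator of `f(x)` to an odd power, hence divides `n`.
-/

/-- The cubic `x (x + α) (x + β)`, whose quadratic twists carry the `θ`-congruent numbers when
`α = r - s` and `β = 2 r`. -/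
def twistCubic {R : Type*} [CommRing R] (α β x : R) : R := x * (x + α) * (x + β)

/-- The quadratic twist `n y² = x (x + α) (x + β)` has a rational point with `x > 0`. -/
def HasTwistPoint (α β n : ℚ) : Prop := ∃ x y : ℚ, 0 < x ∧ twistCubic α β x = n * y ^ 2

theorem twistCubic_pos {R : Type*} [CommRing R] [LinearOrder R] [IsStrictOrderedRing R] {α β x : R}
    (hα : 0 < α) (hβ : 0 < β) (hx : 0 < x) : 0 < twistCubic α β x := by
  unfold twistCubic
  positivity

/-! ### From points on twists to triangles -/

theorem isThetaCongruent_of_mul_sq_sub_one {r s : ℤ} (hr : 0 < r) (hs : s < r) {n : ℕ} {a b t : ℚ}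
    (ha : 0 < a) (hb : 0 < b) (hab : a * b = 2 * n * r)
    (ht : a * (t ^ 2 - 1) = 2 * b * (t - s / r)) : IsThetaCongruent r s n := by
  have hcos : (b - t * a) ^ 2 = a ^ 2 + b ^ 2 - 2 * a * b * (s / r) := by
    linear_combination a * ht
  have hsr : (s : ℚ) / r < 1 := by
    rw [div_lt_one (by exact_mod_cast hr)]
    exact_mod_cast hs
  have hpos : 0 < (b - t * a) ^ 2 := by
    rw [hcos]
    nlinarith [sq_nonneg (a - b), mul_pos ha hb]
  exact ⟨a, b, |b - t * a|, ha, hb, abs_pos.2 (sq_pos_iff.1 hpos), hab, by rwa [sq_abs]⟩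

theorem HasTwistPoint.isThetaCongruent {r s : ℤ} (hr : 0 < r) (hs : s < r) {n : ℕ}
    (h : HasTwistPoint (r - s) (2 * r) n) : IsThetaCongruent r s n := by
  obtain ⟨x, y, hx, hxy⟩ := h
  have hr' : (0 : ℚ) < r := by exact_mod_cast hr
  have hα : (0 : ℚ) < r - s := sub_pos.2 (by exact_mod_cast hs)
  have hny : 0 < (n : ℚ) * |y| ^ 2 := by
    rw [sq_abs, ← hxy]
    exact twistCubic_pos hα (by positivity) hx
  have hn : (0 : ℚ) < n := pos_of_mul_pos_left hny (sq_nonneg _)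
  have hy : 0 < |y| := abs_pos.2 fun hy => by simp [hy] at hny
  rw [← sq_abs, twistCubic] at hxy
  -- The third side is `|b - t a|` with `t = 1 + x / r`; the ratio `a : b` is then forced.
  refine isThetaCongruent_of_mul_sq_sub_one hr hs (a := 2 * r * n * |y| / (x * (x + 2 * r)))
    (b := n * |y| / (x + (r - s))) (t := 1 + x / r) (by positivity) (by positivity) ?_ ?_
  · rw [div_mul_div_comm, div_eq_iff (by positivity)]
    linear_combination (-2 * r * n) * hxy
  · have : x + (r - s : ℚ) ≠ 0 := by positivity
    field_simp
    ring

/-! ### A point on the product of two twists -/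

/-- The abscissa `x` for which the product of the cubics at `x` and `q x` is `q` times a square. -/
def abscissa {K : Type*} [Field K] (α β q : K) : K :=
  ((β - α) ^ 2 * (1 + q) ^ 2 - 4 * (α + β) ^ 2 * q) / (8 * (α + β) * q * (1 + q))

-- `(x + α)(x + β)(qx + α)(qx + β)` and the square of the quadratic on the right have the same
-- terms of degree `0`, `1` and `4`, so that equality is a linear condition on `x`.
theorem twistCubic_mul_twistCubic_abscissa {K : Type*} [Field K] {α β q x : K}
    (hx : x = abscissa α β q) (hden : 8 * (α + β) * q * (1 + q) ≠ 0) :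
    4 * (twistCubic α β x * twistCubic α β (q * x)) =
      q * (x * (-2 * q * x ^ 2 + (α + β) * (1 + q) * x + 2 * (α * β))) ^ 2 := by
  rw [abscissa, eq_div_iff hden] at hx
  unfold twistCubic
  linear_combination q * x ^ 4 * hx

theorem hasTwistPoint_mul {α β q k n w y : ℚ} (hα : 0 < α) (hβ : 0 < β) (hq : 0 < q)
    (hx : 0 < abscissa α β q) (hqk : q = k * w ^ 2)
    (hxy : twistCubic α β (abscissa α β q) = n * y ^ 2) : HasTwistPoint α β (k * n) := by
  have hprod := twistCubic_mul_twistCubic_abscissa (α := α) (β := β) rfl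
    (by positivity : 8 * (α + β) * q * (1 + q) ≠ 0)
  have hny : n * y ^ 2 ≠ 0 := hxy ▸ (twistCubic_pos hα hβ hx).ne'
  obtain ⟨hn, hy⟩ : n ≠ 0 ∧ y ≠ 0 := by simpa using hny
  set x := abscissa α β q
  set z := x * (-2 * q * x ^ 2 + (α + β) * (1 + q) * x + 2 * (α * β))
  refine ⟨q * x, w * z / (2 * n * y), mul_pos hq hx, mul_left_cancel₀ hny ?_⟩
  rw [hxy] at hprod
  field_simp
  linear_combination hprod + z ^ 2 * hqk

/-! ### The abscissa in homogeneous coordinates -/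

section Homogeneous

/-- The common shape of the numerators of `x`, `x + α` and `x + β`, where `x` is the abscissa at
`q = P / Q` and `D = 2 (α + β)`. -/
def abscissaForm {R : Type*} [CommRing R] (D a b P Q : R) : R :=
  (P + Q) * (a ^ 2 * P + b ^ 2 * Q) - D ^ 2 * P * Q

/-- The denominator of the abscissa at `q = P / Q`. -/
def abscissaDen {R : Type*} [CommRing R] (α β P Q : R) : R :=
  2 ^ 2 * (2 * (α + β) * P * (P + Q))

/-- The value of the cubic at the abscissa for `q = P / Q`, times the fourth power of the
denominator. -/
def cubicForm {R : Type*} [CommRing R] (α β P Q : R) : R :=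
  abscissaDen α β P Q * abscissaForm (2 * (α + β)) (β - α) (β - α) P Q *
    abscissaForm (2 * (α + β)) (3 * α + β) (β - α) P Q *
    abscissaForm (2 * (α + β)) (α + 3 * β) (β - α) P Q

theorem abscissaForm_swap {R : Type*} [CommRing R] (D a b P Q : R) :
    abscissaForm D a b P Q = abscissaForm D b a Q P := by
  unfold abscissaForm
  ring

variable {K : Type*} [Field K] {α β P Q : K}

theorem abscissa_div (hQ : Q ≠ 0) :
    abscissa α β (P / Q) =
      abscissaForm (2 * (α + β)) (β - α) (β - α) P Q / abscissaDen α β P Q := by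
  unfold abscissa abscissaForm abscissaDen
  have hnum : (β - α) ^ 2 * (1 + P / Q) ^ 2 - 4 * (α + β) ^ 2 * (P / Q) =
      ((P + Q) * ((β - α) ^ 2 * P + (β - α) ^ 2 * Q) - (2 * (α + β)) ^ 2 * P * Q) / Q ^ 2 := by
    field_simp
    ring
  have hden : 8 * (α + β) * (P / Q) * (1 + P / Q) =
      2 ^ 2 * (2 * (α + β) * P * (P + Q)) / Q ^ 2 := by
    field_simp
    ring
  rw [hnum, hden, div_div_div_cancel_right₀ (pow_ne_zero 2 hQ)]

-- The shifts stay in the same family of forms because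
-- `(β - α)² + 8 α (α + β) = (3 α + β)²` and `(β - α)² + 8 β (α + β) = (α + 3 β)²`.
theorem twistCubic_abscissa_div (hQ : Q ≠ 0) (hden : abscissaDen α β P Q ≠ 0) :
    twistCubic α β (abscissa α β (P / Q)) = cubicForm α β P Q / abscissaDen α β P Q ^ 4 := by
  have hα : abscissa α β (P / Q) + α =
      abscissaForm (2 * (α + β)) (3 * α + β) (β - α) P Q / abscissaDen α β P Q := by
    rw [abscissa_div hQ, div_add' _ _ _ hden]
    unfold abscissaForm abscissaDen
    ring
  have hβ : abscissa α β (P / Q) + β =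
      abscissaForm (2 * (α + β)) (α + 3 * β) (β - α) P Q / abscissaDen α β P Q := by
    rw [abscissa_div hQ, div_add' _ _ _ hden]
    unfold abscissaForm abscissaDen
    ring
  rw [twistCubic, hα, hβ, abscissa_div hQ, cubicForm]
  field_simp

theorem abscissaForm_pos {D a b P Q : ℤ} (ha : a ≠ 0) (hP : 0 < P) (hQ : 0 < Q)
    (hPQ : D ^ 2 * Q < P) : 0 < abscissaForm D a b P Q := by
  have ha' : 0 < a ^ 2 := by positivity
  calc 0 < P * (P - D ^ 2 * Q) := mul_pos hP (sub_pos.2 hPQ)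
    _ ≤ (P * (P - D ^ 2 * Q) + (a ^ 2 - 1) * P ^ 2) + (a ^ 2 * P * Q + (P + Q) * (b ^ 2 * Q)) := by
      have := mul_nonneg (Int.sub_nonneg_of_le ha') (sq_nonneg P)
      have : 0 ≤ a ^ 2 * P * Q + (P + Q) * (b ^ 2 * Q) := by positivity
      linarith
    _ = abscissaForm D a b P Q := by
      unfold abscissaForm
      ring

end Homogeneous

/-! ### Parity of valuations -/

/-- The ratio `P / Q` is `p`-adically close to `0` or to `∞`, with precision `p ^ L`. -/
def IsExtremeAt (p L : ℕ) (P Q : ℤ) : Prop :=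
  (p : ℤ) ^ L ∣ P ∧ ¬(p : ℤ) ∣ Q ∨ (p : ℤ) ^ L ∣ Q ∧ ¬(p : ℤ) ∣ P

theorem IsExtremeAt.symm {p L : ℕ} {P Q : ℤ} (h : IsExtremeAt p L P Q) : IsExtremeAt p L Q P :=
  Or.symm h

section Parity

theorem even_padicValInt_of_not_dvd {p : ℕ} {x : ℤ} (hx : ¬(p : ℤ) ∣ x) :
    Even (padicValInt p x) := by
  simp [padicValInt.eq_zero_of_not_dvd hx]

variable {p : ℕ} [Fact p.Prime]

theorem even_padicValInt_mul {x y : ℤ} (hx : Even (padicValInt p x)) (hy : Even (padicValInt p y)) :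
    Even (padicValInt p (x * y)) := by
  rcases eq_or_ne x 0 with rfl | hx0
  · simp
  rcases eq_or_ne y 0 with rfl | hy0
  · simp
  rw [padicValInt.mul hx0 hy0]
  exact hx.add hy

theorem even_padicValInt_sq (x : ℤ) : Even (padicValInt p (x ^ 2)) := by
  rcases eq_or_ne x 0 with rfl | hx
  · simp
  · rw [sq, padicValInt.mul hx hx]
    exact ⟨_, rfl⟩

theorem even_padicValInt_mul_sq {u : ℤ} (hu : ¬(p : ℤ) ∣ u) (z : ℤ) :
    Even (padicValInt p (u * z ^ 2)) :=
  even_padicValInt_mul (even_padicValInt_of_not_dvd hu) (even_padicValInt_sq z)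

theorem not_dvd_of_even_padicValInt_mul_sq {n : ℕ} {z : ℤ} (hn : Squarefree n) (hz : z ≠ 0)
    (h : Even (padicValInt p (n * z ^ 2))) : ¬p ∣ n := by
  intro hpn
  have hn0 : (n : ℤ) ≠ 0 := by exact_mod_cast hn.ne_zero
  have hval : padicValNat p n = 1 :=
    le_antisymm (Nat.factorization_def n (Fact.out : p.Prime) ▸ hn.natFactorization_le_one p)
      (one_le_padicValNat_of_dvd hn.ne_zero hpn)
  rw [padicValInt.mul hn0 (pow_ne_zero 2 hz), padicValInt.of_nat, hval, Nat.even_add] at h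
  simp [even_padicValInt_sq] at h

theorem even_padicValInt_of_pow_dvd_sub_sq {L : ℕ} {x z : ℤ} (h : (p : ℤ) ^ L ∣ x - z ^ 2)
    (hz : ¬(p : ℤ) ^ L ∣ z ^ 2) : Even (padicValInt p x) := by
  have hlt : emultiplicity (p : ℤ) (z ^ 2) < emultiplicity (p : ℤ) (x - z ^ 2) :=
    (emultiplicity_lt_iff_not_dvd.2 hz).trans_le (le_emultiplicity_of_pow_dvd h)
  have heq := emultiplicity_add_of_gt hlt
  rw [sub_add_cancel] at heq
  have hz0 : z ^ 2 ≠ 0 := fun h0 => hz (h0 ▸ dvd_zero _)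
  have hx0 : x ≠ 0 := fun h0 => hz ((dvd_sub_right (h0 ▸ dvd_zero _)).1 h)
  have hp : p ≠ 1 := (Fact.out : p.Prime).ne_one
  have hval : padicValInt p x = padicValInt p (z ^ 2) := by
    rw [padicValInt.of_ne_one_ne_zero hp hx0, padicValInt.of_ne_one_ne_zero hp hz0,
      multiplicity_eq_of_emultiplicity_eq heq]
  exact hval ▸ even_padicValInt_sq z

theorem not_pow_dvd_sq {L : ℕ} {c : ℤ} (hc : c ≠ 0) (hL : c ^ 2 ≤ L) : ¬(p : ℤ) ^ L ∣ c ^ 2 := by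
  intro h
  have hlt : (L : ℤ) < (p : ℤ) ^ L := by
    exact_mod_cast Nat.lt_pow_self (Fact.out : p.Prime).one_lt
  have := Int.le_of_dvd (by positivity) h
  omega

theorem even_padicValInt_abscissaForm {L : ℕ} {D a b P Q : ℤ} (ha : ¬(p : ℤ) ^ L ∣ a ^ 2)
    (hb : ¬(p : ℤ) ^ L ∣ b ^ 2) (hPQ : IsExtremeAt p L P Q) :
    Even (padicValInt p (abscissaForm D a b P Q)) := by
  have hp : Prime (p : ℤ) := Nat.prime_iff_prime_int.1 Fact.out
  wlog hleft : (p : ℤ) ^ L ∣ P ∧ ¬(p : ℤ) ∣ Q generalizing a b P Q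
  · rw [abscissaForm_swap]
    exact this hb ha hPQ.symm (hPQ.resolve_left hleft)
  obtain ⟨hP, hQ⟩ := hleft
  refine even_padicValInt_of_pow_dvd_sub_sq (z := b * Q) (hP.trans
    ⟨(P + Q) * a ^ 2 + b ^ 2 * Q - D ^ 2 * Q, by unfold abscissaForm; ring⟩) fun h => hb ?_
  rw [mul_pow] at h
  exact hp.pow_dvd_of_dvd_mul_right _ (mt hp.dvd_of_dvd_pow hQ) h

theorem even_padicValInt_cubicForm {L : ℕ} {α β P Q : ℤ} (hα : 0 < α) (hβ : 0 < β) (hαβ : α ≠ β)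
    (hL : (3 * (α + β)) ^ 2 ≤ L) (hPQ : IsExtremeAt p L P Q)
    (hden : Even (padicValInt p (2 * (α + β) * P * (P + Q)))) :
    Even (padicValInt p (cubicForm α β P Q)) := by
  have hbound : ∀ c : ℤ, c ≠ 0 → |c| ≤ 3 * (α + β) → ¬(p : ℤ) ^ L ∣ c ^ 2 := fun c hc hle =>
    not_pow_dvd_sq hc ((sq_le_sq' (abs_le.1 hle).1 (abs_le.1 hle).2).trans hL)
  have hδ := hbound (β - α) (by omega) (abs_le.2 (by omega))
  have h₁ := hbound (3 * α + β) (by omega) (abs_le.2 (by omega))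
  have h₂ := hbound (α + 3 * β) (by omega) (abs_le.2 (by omega))
  exact even_padicValInt_mul (even_padicValInt_mul (even_padicValInt_mul
    (even_padicValInt_mul (even_padicValInt_sq 2) hden)
    (even_padicValInt_abscissaForm hδ hδ hPQ)) (even_padicValInt_abscissaForm h₁ hδ hPQ))
    (even_padicValInt_abscissaForm h₂ hδ hPQ)

end Parity

theorem dvd_of_dvd_mul_sq_of_not_sq_dvd {R : Type*} [CommMonoidWithZero R] {l n z : R}
    (hl : Prime l) (h : l ∣ n * z ^ 2) (hsq : ¬l ^ 2 ∣ n * z ^ 2) : l ∣ n :=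
  (hl.dvd_or_dvd h).resolve_right fun hz =>
    hsq ((pow_dvd_pow_of_dvd (hl.dvd_of_dvd_pow hz) 2).mul_left n)

theorem dvd_and_not_sq_dvd_cubicForm {R : Type*} [CommRing R] [IsDomain R] {l : R} (hl : Prime l)
    {α β P Q : R} (hD : ¬l ∣ 2 * (α + β)) (hQ : ¬l ∣ Q) (hdvd : l ∣ P + Q)
    (hsq : ¬l ^ 2 ∣ P + Q) :
    l ∣ cubicForm α β P Q ∧ ¬l ^ 2 ∣ cubicForm α β P Q := by
  have hP : ¬l ∣ P := fun h => hQ ((dvd_add_right h).1 hdvd)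
  have h2 : ¬l ∣ 2 ^ 2 := fun h => hD ((hl.dvd_of_dvd_pow h).mul_right _)
  have hform : ∀ a b, ¬l ∣ abscissaForm (2 * (α + β)) a b P Q := fun a b => by
    rw [abscissaForm, dvd_sub_right (hdvd.mul_right _)]
    exact hl.not_dvd_mul (hl.not_dvd_mul (mt hl.dvd_of_dvd_pow hD) hP) hQ
  have hfactor : cubicForm α β P Q = (P + Q) * (2 ^ 2 * (2 * (α + β) * P) *
      abscissaForm (2 * (α + β)) (β - α) (β - α) P Q *
      abscissaForm (2 * (α + β)) (3 * α + β) (β - α) P Q *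
      abscissaForm (2 * (α + β)) (α + 3 * β) (β - α) P Q) := by
    unfold cubicForm abscissaDen
    ring
  rw [hfactor]
  refine ⟨hdvd.mul_right _, fun h => hsq (hl.pow_dvd_of_dvd_mul_right _ ?_ h)⟩
  exact hl.not_dvd_mul (hl.not_dvd_mul (hl.not_dvd_mul (hl.not_dvd_mul h2
    (hl.not_dvd_mul hD hP)) (hform _ _)) (hform _ _)) (hform _ _)

/-! ### Choice of the ratio `P / Q` -/

theorem not_sq_dvd_mul_add_mul_sq_add {l a b m t : ℕ} (hl : l.Prime) (h : l ^ 2 ∣ a * m ^ 2 + b)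
    (hnd : ¬l ∣ 2 * a * m * t) : ¬l ^ 2 ∣ a * (m + l * t) ^ 2 + b := by
  have hexp : a * (m + l * t) ^ 2 + b =
      a * m ^ 2 + b + l ^ 2 * (a * t ^ 2) + l * (2 * a * m * t) := by ring
  rw [hexp, Nat.dvd_add_right (h.add (Dvd.intro _ rfl)), sq]
  exact fun h' => hnd (Nat.dvd_of_mul_dvd_mul_left hl.pos h')

theorem exists_prime_gt_dvd_mul_sq_add {a b N : ℕ} (ha : 0 < a) (hN : 0 < N) (B : ℕ) :
    ∃ l m : ℕ, l.Prime ∧ B < l ∧ B < m ∧ m ≡ 1 [MOD N] ∧ l ∣ a * m ^ 2 + b := by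
  -- For `m = 1 + N (a + b) z` the value is `(a + b) (1 + z y)`, so any prime factor of `1 + z y`
  -- will do as soon as `z` is divisible by all small primes.
  set z := B.factorial
  have hz : 0 < z := B.factorial_pos
  set y := a * N * (2 + N * (a + b) * z)
  have hy0 : 0 < y := by positivity
  obtain ⟨l, hl, hdvd⟩ := Nat.exists_prime_and_dvd (n := 1 + z * y)
    (by have := Nat.mul_pos hz hy0; omega)
  refine ⟨l, 1 + N * (a + b) * z, hl, ?_, ?_, ?_, ?_⟩
  · by_contra! hle
    have hlz : l ∣ z * y := (Nat.dvd_factorial hl.pos hle).mul_right y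
    exact hl.not_dvd_one ((Nat.dvd_add_left hlz).1 hdvd)
  · have : B ≤ z := B.self_le_factorial
    nlinarith [Nat.mul_pos hN (by omega : 0 < a + b)]
  · simp [Nat.ModEq, mul_assoc]
  · have : a * (1 + N * (a + b) * z) ^ 2 + b = (a + b) * (1 + z * y) := by ring
    exact this ▸ hdvd.mul_left _

theorem exists_prime_gt_dvd_not_sq_dvd_mul_sq_add {a b N : ℕ} (ha : 0 < a) (hb : 0 < b)
    (hN : 0 < N) (B : ℕ) :
    ∃ l m : ℕ, l.Prime ∧ B < l ∧ B < m ∧ m ≡ 1 [MOD N] ∧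
      l ∣ a * m ^ 2 + b ∧ ¬l ^ 2 ∣ a * m ^ 2 + b := by
  obtain ⟨l, m, hl, hBl, hBm, hm, hdvd⟩ :=
    exists_prime_gt_dvd_mul_sq_add (b := b) ha hN (B + 2 + a + b + N)
  by_cases hsq : l ^ 2 ∣ a * m ^ 2 + b
  · have hsmall : ∀ c, 0 < c → c < l → ¬l ∣ c := fun c => Nat.not_dvd_of_pos_of_lt
    have hlm : ¬l ∣ m := fun h =>
      hsmall b hb (by omega) ((Nat.dvd_add_right ((h.pow two_ne_zero).mul_left a)).1 hdvd)
    refine ⟨l, m + l * N, hl, by omega, by omega, ?_, ?_, not_sq_dvd_mul_add_mul_sq_add hl hsq ?_⟩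
    · simpa [Nat.ModEq] using hm
    · have : a * (m + l * N) ^ 2 + b = a * m ^ 2 + b + l * (a * (N * (2 * m + l * N))) := by ring
      exact this ▸ hdvd.add (Dvd.intro _ rfl)
    · simp only [hl.dvd_mul, not_or]
      exact ⟨⟨⟨hsmall 2 two_pos (by omega), hsmall a ha (by omega)⟩, hlm⟩, hsmall N hN (by omega)⟩
  · exact ⟨l, m, hl, by omega, by omega, hm, hdvd, hsq⟩

theorem exists_eq_squarefree_mul_sq {x : ℤ} (hx : 0 < x) :
    ∃ (n : ℕ) (z : ℤ), Squarefree n ∧ z ≠ 0 ∧ x = n * z ^ 2 := by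
  obtain ⟨n, z, -, hz, hnz, hn⟩ := Nat.sq_mul_squarefree_of_pos (Int.natAbs_pos.2 hx.ne')
  refine ⟨n, z, hn, by exact_mod_cast hz.ne', ?_⟩
  rw [← Int.natAbs_of_nonneg hx.le, ← hnz]
  push_cast
  ring

theorem exists_coprime_mul_eq_even_padicValInt {k : ℕ} (hk : Squarefree k) {D : ℤ} (hD : 0 < D) :
    ∃ d e : ℕ, d * e = k ∧ d.Coprime e ∧
      (∀ p : ℕ, p.Prime → p ∣ d → Even (padicValInt p (D * d))) ∧
      ∀ p : ℕ, p.Prime → p ∣ e → Even (padicValInt p D) := by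
  obtain ⟨a, z, ha, -, hDa⟩ := exists_eq_squarefree_mul_sq hD
  obtain ⟨e, hke⟩ := Nat.gcd_dvd_left k a
  obtain ⟨u, hau⟩ := Nat.gcd_dvd_right k a
  set d := k.gcd a
  have hde : d.Coprime e := Nat.coprime_of_squarefree_mul (hke ▸ hk)
  have hdu : d.Coprime u := Nat.coprime_of_squarefree_mul (hau ▸ ha)
  refine ⟨d, e, hke.symm, hde, fun p hp hpd => ?_, fun p hp hpe => ?_⟩
  all_goals have := Fact.mk hp
  · have hpu : ¬(p : ℤ) ∣ u := fun h =>
      Nat.not_coprime_of_dvd_of_dvd hp.one_lt hpd (Int.natCast_dvd_natCast.1 h) hdu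
    have hDd : D * d = u * (d * z) ^ 2 := by
      rw [hDa, hau]
      push_cast
      ring
    exact hDd ▸ even_padicValInt_mul_sq hpu _
  · have hpa : ¬(p : ℤ) ∣ a := fun h =>
      have hpd : p ∣ d := Nat.dvd_gcd (hke ▸ hpe.mul_left d) (Int.natCast_dvd_natCast.1 h)
      Nat.not_coprime_of_dvd_of_dvd hp.one_lt hpd hpe hde
    exact hDa ▸ even_padicValInt_mul_sq hpa z

theorem isExtremeAt_and_even_padicValInt_of_dvd {p d e m L : ℕ} {D P Q : ℤ} (hp : p.Prime)
    (hP : P = d ^ (2 * L + 1) * m ^ 2) (hQ : Q = e ^ (2 * L + 1)) (hde : d.Coprime e)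
    (hm : m ≡ 1 [MOD d * e]) (hd : p ∣ d → Even (padicValInt p (D * d)))
    (he : p ∣ e → Even (padicValInt p D)) (hpde : p ∣ d * e) :
    IsExtremeAt p L P Q ∧ Even (padicValInt p (D * P * (P + Q))) := by
  have := Fact.mk hp
  have hpZ := Nat.prime_iff_prime_int.1 hp
  have hpow : ∀ {c : ℕ}, p ∣ c → ∀ {j}, j ≤ 2 * L + 1 → (p : ℤ) ^ j ∣ (c : ℤ) ^ (2 * L + 1) :=
    fun hc _ hj => (pow_dvd_pow_of_dvd (Int.natCast_dvd_natCast.2 hc) _).trans (pow_dvd_pow _ hj)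
  have hnpow : ∀ {c : ℕ}, ¬p ∣ c → ∀ j, ¬(p : ℤ) ∣ (c : ℤ) ^ j := fun hc _ h =>
    hc (Int.natCast_dvd_natCast.1 (hpZ.dvd_of_dvd_pow h))
  rcases hp.dvd_mul.1 hpde with hpd | hpe
  · have hpQ : ¬(p : ℤ) ∣ Q := hQ ▸ hnpow
      (fun hpe => Nat.not_coprime_of_dvd_of_dvd hp.one_lt hpd hpe hde) _
    have hpP : (p : ℤ) ∣ P := hP ▸ ((pow_one (p : ℤ) ▸ hpow hpd (by omega)).mul_right _)
    refine ⟨.inl ⟨hP ▸ (hpow hpd (by omega)).mul_right _, hpQ⟩, ?_⟩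
    have hfactor : D * P * (P + Q) = D * d * (d ^ L * m) ^ 2 * (P + Q) := by
      linear_combination D * (P + Q) * hP
    rw [hfactor]
    exact even_padicValInt_mul (even_padicValInt_mul (hd hpd) (even_padicValInt_sq _))
      (even_padicValInt_of_not_dvd (mt (dvd_add_right hpP).1 hpQ))
  · have hpm : ¬p ∣ m := fun h =>
      hp.not_dvd_one (((hm.of_dvd hpde).dvd_iff dvd_rfl).1 h)
    have hpP : ¬(p : ℤ) ∣ P := hP ▸ hpZ.not_dvd_mul (hnpow
      (fun hpd => Nat.not_coprime_of_dvd_of_dvd hp.one_lt hpd hpe hde) _) (hnpow hpm 2)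
    have hpQ : (p : ℤ) ∣ Q := hQ ▸ pow_one (p : ℤ) ▸ hpow hpe (by omega)
    refine ⟨.inr ⟨hQ ▸ hpow hpe (by omega), hpP⟩, ?_⟩
    exact even_padicValInt_mul
      (even_padicValInt_mul (he hpe) (even_padicValInt_of_not_dvd hpP))
      (even_padicValInt_of_not_dvd (mt (dvd_add_left hpQ).1 hpP))

theorem exists_isExtremeAt_and_prime_dvd_add {k : ℕ} (hk : Squarefree k) {D : ℤ} (hD : 0 < D)
    (L B : ℕ) :
    ∃ P Q w : ℤ, 0 < P ∧ 0 < Q ∧ B * Q < P ∧ P * Q = k * w ^ 2 ∧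
      (∀ p : ℕ, p.Prime → p ∣ k →
        IsExtremeAt p L P Q ∧ Even (padicValInt p (D * P * (P + Q)))) ∧
      ∃ l : ℕ, l.Prime ∧ B < l ∧ ¬(l : ℤ) ∣ Q ∧ (l : ℤ) ∣ P + Q ∧ ¬(l : ℤ) ^ 2 ∣ P + Q := by
  obtain ⟨d, e, rfl, hde, hd, he⟩ := exists_coprime_mul_eq_even_padicValInt hk hD
  have hk0 : 0 < d * e := Nat.pos_of_ne_zero hk.ne_zero
  have hd0 : 0 < d := Nat.pos_of_mul_pos_right hk0
  have he0 : 0 < e := Nat.pos_of_mul_pos_left hk0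
  set b := e ^ (2 * L + 1) with hb
  have hb0 : 0 < b := by positivity
  obtain ⟨l, m, hl, hBl, hBm, hm, hdvd, hsq⟩ := exists_prime_gt_dvd_not_sq_dvd_mul_sq_add
    (a := d ^ (2 * L + 1)) (b := b) (by positivity) hb0 hk0 (B * b + B + b)
  have hm0 : 0 < m := by omega
  have hBP : B * b < d ^ (2 * L + 1) * m ^ 2 :=
    calc B * b < m := by omega
      _ ≤ m ^ 2 := Nat.le_self_pow two_ne_zero m
      _ ≤ d ^ (2 * L + 1) * m ^ 2 := Nat.le_mul_of_pos_left _ (by positivity)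
  refine ⟨(d : ℤ) ^ (2 * L + 1) * m ^ 2, b, (d * e : ℤ) ^ L * m, by positivity,
    by exact_mod_cast hb0, by exact_mod_cast hBP, by push_cast [hb]; ring, fun p hp hpk => ?_,
    l, hl, by omega, ?_, by exact_mod_cast hdvd, by exact_mod_cast hsq⟩
  · exact isExtremeAt_and_even_padicValInt_of_dvd hp rfl (by simp [hb]) hde hm (hd p hp)
      (he p hp) hpk
  · exact_mod_cast Nat.not_dvd_of_pos_of_lt hb0 (by omega)

/-! ### Pairs of twists -/

theorem cubicForm_pos {α β P Q : ℤ} (hα : 0 < α) (hβ : 0 < β) (hαβ : α ≠ β) (hP : 0 < P)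
    (hQ : 0 < Q) (hPQ : (2 * (α + β)) ^ 2 * Q < P) : 0 < cubicForm α β P Q := by
  have hden : 0 < abscissaDen α β P Q := by
    unfold abscissaDen
    positivity
  exact mul_pos (mul_pos (mul_pos hden (abscissaForm_pos (sub_ne_zero.2 hαβ.symm) hP hQ hPQ))
    (abscissaForm_pos (by positivity) hP hQ hPQ)) (abscissaForm_pos (by positivity) hP hQ hPQ)

theorem hasTwistPoint_and_hasTwistPoint_mul {α β P Q w n k z : ℤ} (hα : 0 < α) (hβ : 0 < β)
    (hαβ : α ≠ β) (hP : 0 < P) (hQ : 0 < Q) (hPQ : (2 * (α + β)) ^ 2 * Q < P)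
    (hw : P * Q = k * w ^ 2) (hF : cubicForm α β P Q = n * z ^ 2) :
    HasTwistPoint α β n ∧ HasTwistPoint α β (k * n) := by
  have hα' : (0 : ℚ) < α := by exact_mod_cast hα
  have hβ' : (0 : ℚ) < β := by exact_mod_cast hβ
  have hP' : (0 : ℚ) < P := by exact_mod_cast hP
  have hQ' : (0 : ℚ) < Q := by exact_mod_cast hQ
  have hden : 0 < abscissaDen (α : ℚ) β P Q := by
    unfold abscissaDen
    positivity
  have hx : 0 < abscissa (α : ℚ) β (P / Q) := by
    rw [abscissa_div hQ'.ne']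
    refine div_pos ?_ hden
    have := abscissaForm_pos (b := β - α) (sub_ne_zero.2 hαβ.symm) hP hQ hPQ
    unfold abscissaForm at this ⊢
    exact_mod_cast this
  have hcubic : twistCubic (α : ℚ) β (abscissa α β (P / Q)) =
      n * (z / abscissaDen (α : ℚ) β P Q ^ 2) ^ 2 := by
    have hF' : cubicForm (α : ℚ) β P Q = n * z ^ 2 := by
      unfold cubicForm abscissaDen abscissaForm at hF ⊢
      exact_mod_cast hF
    rw [twistCubic_abscissa_div hQ'.ne' hden.ne', hF', div_pow, ← pow_mul, mul_div_assoc]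
  have hratio : (P / Q : ℚ) = k * (w / Q) ^ 2 := by
    have hw' : (P * Q : ℚ) = k * w ^ 2 := by exact_mod_cast hw
    field_simp
    exact hw'
  exact ⟨⟨_, _, hx, hcubic⟩, hasTwistPoint_mul hα' hβ' (div_pos hP' hQ') hx hratio hcubic⟩

theorem exists_squarefree_hasTwistPoint {α β : ℤ} (hα : 0 < α) (hβ : 0 < β) (hαβ : α ≠ β) {k : ℕ}
    (hk : Squarefree k) (B : ℕ) :
    ∃ n : ℕ, B < n ∧ Squarefree n ∧ n.Coprime k ∧
      HasTwistPoint α β n ∧ HasTwistPoint α β (k * n) := by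
  have hD : 0 < 2 * (α + β) := by positivity
  obtain ⟨L, hL⟩ := Int.eq_ofNat_of_zero_le (sq_nonneg (3 * (α + β)))
  obtain ⟨C, hC⟩ := Int.eq_ofNat_of_zero_le (sq_nonneg (2 * (α + β)))
  obtain ⟨P, Q, w, hP, hQ, hPQ, hw, hlocal, l, hl, hBl, hlQ, hdvd, hsq⟩ :=
    exists_isExtremeAt_and_prime_dvd_add hk hD L (B + C)
  have hPQ' : (2 * (α + β)) ^ 2 * Q < P := by
    push_cast at hPQ
    nlinarith
  obtain ⟨n, z, hn, hz, hF⟩ :=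
    exists_eq_squarefree_mul_sq (cubicForm_pos hα hβ hαβ hP hQ hPQ')
  have hnk : n.Coprime k := Nat.coprime_of_dvd fun p hp hpn hpk => by
    have := Fact.mk hp
    have heven := even_padicValInt_cubicForm hα hβ hαβ hL.le (hlocal p hp hpk).1 (hlocal p hp hpk).2
    exact not_dvd_of_even_padicValInt_mul_sq hn hz (hF ▸ heven) hpn
  have hln : l ∣ n := by
    have hlD : ¬(l : ℤ) ∣ 2 * (α + β) := fun h => by
      have := Int.le_of_dvd hD h
      nlinarith
    have hlF := dvd_and_not_sq_dvd_cubicForm (Nat.prime_iff_prime_int.1 hl) hlD hlQ hdvd hsq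
    rw [hF] at hlF
    exact Int.natCast_dvd_natCast.1
      (dvd_of_dvd_mul_sq_of_not_sq_dvd (Nat.prime_iff_prime_int.1 hl) hlF.1 hlF.2)
  have hBn : B < n := by
    have := Nat.le_of_dvd (Nat.pos_of_ne_zero hn.ne_zero) hln
    omega
  exact ⟨n, hBn, hn, hnk, hasTwistPoint_and_hasTwistPoint_mul hα hβ hαβ hP hQ hPQ' hw hF⟩

theorem theta_congruent_multiples_general {r s : ℤ} (hs : |s| < r) {k : ℕ} (hk : Squarefree k) :
    {p : ℕ × ℕ | 0 < p.1 ∧ 0 < p.2 ∧ Squarefree p.1 ∧ Squarefree p.2 ∧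
      IsThetaCongruent r s p.1 ∧ IsThetaCongruent r s p.2 ∧
      p.2 = k * p.1}.Infinite := by
  obtain ⟨hs₁, hs₂⟩ := abs_lt.1 hs
  have hr : 0 < r := by omega
  refine Set.Infinite.of_image Prod.fst (Set.infinite_of_forall_exists_gt fun B => ?_)
  obtain ⟨n, hB, hn, hnk, h₁, h₂⟩ := exists_squarefree_hasTwistPoint (α := r - s) (β := 2 * r)
    (by omega) (by omega) (by omega) hk B
  push_cast at h₁ h₂
  have hkn : Squarefree (k * n) := (Nat.squarefree_mul hnk.symm).2 ⟨hk, hn⟩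
  exact ⟨n, ⟨(n, k * n), ⟨Nat.pos_of_ne_zero hn.ne_zero, Nat.pos_of_ne_zero hkn.ne_zero, hn, hkn,
    h₁.isThetaCongruent hr hs₂,
    HasTwistPoint.isThetaCongruent hr hs₂ (by push_cast; exact h₂), rfl⟩, rfl⟩, hB⟩

theorem abs_lt_of_cos_eq_div {θ : ℝ} (hθ0 : 0 < θ) (hθπ : θ < Real.pi) {r s : ℤ} (hr : 0 < r)
    (hcos : Real.cos θ = (s : ℝ) / (r : ℝ)) : |s| < r := by
  have hr' : (0 : ℝ) < r := by exact_mod_cast hr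
  have hsin := Real.sin_pos_of_pos_of_lt_pi hθ0 hθπ
  have habs : |Real.cos θ| < 1 := by
    rw [← sq_lt_one_iff_abs_lt_one]
    nlinarith [Real.sin_sq_add_cos_sq θ]
  rw [hcos, abs_div, abs_of_pos hr', div_lt_one hr'] at habs
  exact_mod_cast habs

/-- For `θ ∈ (0, π)` with `cos θ = s / r ∈ ℚ` and `k` a positive squarefree integer,
there exist infinitely many pairs `(M, N)` of `θ`-congruent numbers with `N = k * M`. -/
theorem theta_congruent_multiples
    (θ : ℝ) (hθ0 : 0 < θ) (hθπ : θ < Real.pi)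
    (r s : ℤ) (hr : 0 < r) (hrs : Int.gcd s r = 1)
    (hcos : Real.cos θ = (s : ℝ) / (r : ℝ))
    (k : ℕ) (hk : 0 < k) (hksf : Squarefree k) :
    {p : ℕ × ℕ | 0 < p.1 ∧ 0 < p.2 ∧ Squarefree p.1 ∧ Squarefree p.2 ∧
      IsThetaCongruent r s p.1 ∧ IsThetaCongruent r s p.2 ∧
      p.2 = k * p.1}.Infinite := by
  exact theta_congruent_multiples_general (abs_lt_of_cos_eq_div hθ0 hθπ hr hcos) hksf
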